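/- Let α be a dimension vector of Q and V a rigid representation with dim V = α, and set σ = ⟨α,·⟩. Then a representation W of Q is σ-semi-stable if and only if Hom_Q(V,W)=0 and Ext^1_Q(V,W)=0. -/

import Mathlib

set_option autoImplicit false

noncomputable section

open scoped BigOperators

/-! Basic setup for representations of a quiver with vertex set `V`, arrow set `A`,
tail map `t` and head map `h`, over a field `K`. -/

variable (K : Type) [Field K]
variable {V A : Type} [Fintype V] [DecidableEq V] [Fintype A]

/-- The Euler form of the quiver `(V, A, t, h)`. -/
def eulerForm {R : Type} [CommRing R] (t h : A → V) (x y : V → R) : R :=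
  ∑ i, x i * y i - ∑ a, x (t a) * y (h a)

def natZ (x : V → ℕ) : V → ℤ := fun i => (x i : ℤ)
def intQ (x : V → ℤ) : V → ℚ := fun i => (x i : ℚ)
def natQ (x : V → ℕ) : V → ℚ := fun i => (x i : ℚ)

/-- The weight `⟨α,·⟩`. -/
def weightL (t h : A → V) (α : V → ℤ) : V → ℤ :=
  fun i => eulerForm t h α (fun j => if j = i then 1 else 0)

/-- The weight `−⟨·,α⟩`. -/
def weightR (t h : A → V) (α : V → ℤ) : V → ℤ :=
  fun i => - eulerForm t h (fun j => if j = i then 1 else 0) α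

/-- `IsPathFrom t h i p j` : the list of arrows `p` is a path from `i` to `j`. -/
def IsPathFrom (t h : A → V) : V → List A → V → Prop
  | i, [], j => i = j
  | i, a :: p, j => t a = i ∧ IsPathFrom t h (h a) p j

/-- The quiver has no (nontrivial) oriented cycles. -/
def Acyclic (t h : A → V) : Prop := ∀ (i : V) (p : List A), IsPathFrom t h i p i → p = []

/-- The dimension vector `γ_i` of the projective indecomposable at `i`:
`γ_i(j)` is the number of paths from `i` to `j`. -/
def gammaRoot (t h : A → V) (i : V) : V → ℕ :=
  fun j => Set.ncard {p : List A | IsPathFrom t h i p j}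

/-- A finite-dimensional representation of the quiver `(V, A, t, h)` over `K`. -/
structure QuivRep (K : Type) [Field K] (V A : Type) (t h : A → V) : Type 1 where
  sp : V → Type
  [inst1 : ∀ i, AddCommGroup (sp i)]
  [inst2 : ∀ i, Module K (sp i)]
  [inst3 : ∀ i, FiniteDimensional K (sp i)]
  map : ∀ a : A, sp (t a) →ₗ[K] sp (h a)

attribute [instance] QuivRep.inst1 QuivRep.inst2 QuivRep.inst3

namespace QuivRep

variable {K} {t h : A → V}

/-- The dimension vector of a representation. -/
def dimVec (X : QuivRep K V A t h) : V → ℕ := fun i => Module.finrank K (X.sp i)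

/-- A subrepresentation. -/
structure Sub (X : QuivRep K V A t h) where
  sub : ∀ i, Submodule K (X.sp i)
  le : ∀ a : A, ∀ x ∈ sub (t a), X.map a x ∈ sub (h a)

/-- The dimension vector of a subrepresentation. -/
def Sub.dimVec {X : QuivRep K V A t h} (U : Sub X) : V → ℕ :=
  fun i => Module.finrank K (U.sub i)

/-- The space `Hom_Q(X,Y)` of morphisms of representations, as a submodule of
`Π i, Hom_K(X(i),Y(i))`. -/
def homS (X Y : QuivRep K V A t h) : Submodule K (∀ i, X.sp i →ₗ[K] Y.sp i) where
  carrier := {φ | ∀ a : A, (φ (h a)).comp (X.map a) = (Y.map a).comp (φ (t a))}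
  zero_mem' := by intro a; simp
  add_mem' := by
    intro f g hf hg a
    simp only [Pi.add_apply, LinearMap.add_comp, LinearMap.comp_add, hf a, hg a]
  smul_mem' := by
    intro c f hf a
    simp only [Pi.smul_apply, LinearMap.smul_comp, LinearMap.comp_smul, hf a]

/-- The dimension of `Hom_Q(X,Y)`. -/
def homDim (X Y : QuivRep K V A t h) : ℕ := Module.finrank K (homS X Y)

/-- The map `d^X_Y` from Ringel's canonical exact sequence. -/
def dmap (X Y : QuivRep K V A t h) :
    (∀ i, X.sp i →ₗ[K] Y.sp i) →ₗ[K] (∀ a : A, X.sp (t a) →ₗ[K] Y.sp (h a)) where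
  toFun φ := fun a => (φ (h a)).comp (X.map a) - (Y.map a).comp (φ (t a))
  map_add' f g := by
    funext a
    simp only [Pi.add_apply, LinearMap.add_comp, LinearMap.comp_add]
    abel
  map_smul' c f := by
    funext a
    simp only [Pi.smul_apply, LinearMap.smul_comp, LinearMap.comp_smul, smul_sub,
      RingHom.id_apply]

/-- The dimension of `Ext^1_Q(X,Y)`, i.e. of the cokernel of `d^X_Y`. -/
def extDim (X Y : QuivRep K V A t h) : ℕ :=
  Module.finrank K ((∀ a : A, X.sp (t a) →ₗ[K] Y.sp (h a)) ⧸ LinearMap.range (dmap X Y))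

/-- A rigid representation: `Ext^1_Q(X,X) = 0`. -/
def IsRigid (X : QuivRep K V A t h) : Prop := extDim X X = 0

/-- A Schur representation: `End_Q(X) = K·id`. -/
def IsSchur (X : QuivRep K V A t h) : Prop := homDim X X = 1

/-- An exceptional representation: rigid and Schur. -/
def IsExceptional (X : QuivRep K V A t h) : Prop := IsRigid X ∧ IsSchur X

end QuivRep

/-- `β` is a real Schur root: the dimension vector of an exceptional representation. -/
def isRealSchurRoot (t h : A → V) (β : V → ℕ) : Prop :=
  ∃ X : QuivRep K V A t h, X.dimVec = β ∧ X.IsExceptional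

/-- `ext_Q(α,β)` : the generic (minimal) value of `dim Ext^1_Q` on pairs of
representations of dimension vectors `α`, `β`. -/
def extMin (t h : A → V) (α β : V → ℕ) : ℕ :=
  sInf {n | ∃ X Y : QuivRep K V A t h, X.dimVec = α ∧ Y.dimVec = β ∧ QuivRep.extDim X Y = n}

/-- `hom_Q(α,β)` : the generic (minimal) value of `dim Hom_Q`. -/
def homMin (t h : A → V) (α β : V → ℕ) : ℕ :=
  sInf {n | ∃ X Y : QuivRep K V A t h, X.dimVec = α ∧ Y.dimVec = β ∧ QuivRep.homDim X Y = n}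

/-- `β' ↪ β` : every representation of dimension vector `β` has a subrepresentation of
dimension vector `β'`. -/
def Embeds (t h : A → V) (β' β : V → ℕ) : Prop :=
  ∀ X : QuivRep K V A t h, X.dimVec = β → ∃ U : QuivRep.Sub X, U.dimVec = β'

/-- `σ`-semi-stability of a representation. -/
def IsSemistable {t h : A → V} (σ : V → ℤ) (X : QuivRep K V A t h) : Prop :=
  (∑ i, σ i * (X.dimVec i : ℤ)) = 0 ∧
  ∀ U : QuivRep.Sub X, (∑ i, σ i * (U.dimVec i : ℤ)) ≤ 0

/-- `σ`-stability of a representation. -/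
def IsStable {t h : A → V} (σ : V → ℤ) (X : QuivRep K V A t h) : Prop :=
  (∑ i, σ i * (X.dimVec i : ℤ)) = 0 ∧ X.dimVec ≠ (fun _ => 0) ∧
  ∀ U : QuivRep.Sub X, U.dimVec ≠ (fun _ => 0) → U.dimVec ≠ X.dimVec →
    (∑ i, σ i * (U.dimVec i : ℤ)) < 0

/-- Isomorphism of representations. -/
def RepIso {t h : A → V} (X Y : QuivRep K V A t h) : Prop :=
  ∃ e : ∀ i, X.sp i ≃ₗ[K] Y.sp i,
    ∀ (a : A) (x : X.sp (t a)), e (h a) (X.map a x) = Y.map a (e (t a) x)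

/-- A quiver exceptional sequence of dimension vectors. -/
def IsQES (t h : A → V) {l : ℕ} (b : Fin l → V → ℕ) : Prop :=
  (∀ j, isRealSchurRoot K t h (b j)) ∧
  ∀ i j : Fin l, i < j →
    homMin K t h (b i) (b j) = 0 ∧ extMin K t h (b i) (b j) = 0 ∧
      eulerForm t h (natZ (b j)) (natZ (b i)) ≤ 0

/-- The cone of nonnegative rational linear combinations of a finite set of integral
vectors. -/
def coneOf (C : Finset (V → ℤ)) : Set (V → ℚ) :=
  {x | ∃ lam : (V → ℤ) → ℚ, (∀ c, 0 ≤ lam c) ∧ x = ∑ c ∈ C, lam c • intQ c}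

/-- A compatible subset of the set `Ψ(Q)_{≥ -1}` of almost positive real Schur roots. -/
def IsCompatible (t h : A → V) (C : Finset (V → ℤ)) : Prop :=
  (∀ x ∈ C, (∃ β : V → ℕ, isRealSchurRoot K t h β ∧ x = natZ β) ∨
      (∃ i : V, x = fun j => -(gammaRoot t h i j : ℤ))) ∧
  (∀ x ∈ C, ∀ y ∈ C, x ≠ y →
    (∀ β₁ β₂ : V → ℕ, isRealSchurRoot K t h β₁ → isRealSchurRoot K t h β₂ →
      x = natZ β₁ → y = natZ β₂ → extMin K t h β₁ β₂ = 0) ∧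
    (∀ (β : V → ℕ) (i : V), isRealSchurRoot K t h β →
      x = natZ β → y = (fun j => -(gammaRoot t h i j : ℤ)) → β i = 0))

/-- The domain of semi-invariants `D(β) ⊆ ℚ^{Q_0}`. -/
def Dom (t h : A → V) (β : V → ℕ) : Set (V → ℚ) :=
  {x | eulerForm t h x (natQ β) = 0 ∧
    ∀ β' : V → ℕ, Embeds K t h β' β → eulerForm t h x (natQ β') ≤ 0}

/-- A quiver exceptional set: a subset of `Ψ(Q)_{≥ -1}` of the form
`{β_1,…,β_l, −γ_{i_{l+1}},…,−γ_{i_m}}` with `β_j(i_k) = 0` and whose real-Schur-root part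
can be ordered into a quiver exceptional sequence. -/
def IsQExcSet (t h : A → V) (E : Finset (V → ℤ)) : Prop :=
  ∃ (l m : ℕ) (b : Fin l → V → ℕ) (g : Fin m → V),
    Function.Injective b ∧ Function.Injective g ∧ IsQES K t h b ∧
    (∀ j k, b j (g k) = 0) ∧
    (E : Set (V → ℤ)) =
      (Set.range fun j => natZ (b j)) ∪
      (Set.range fun k => (fun v => -(gammaRoot t h (g k) v : ℤ)))


/-- The underlying graph of the quiver is connected. -/
def IsConnectedQuiver (t h : A → V) : Prop :=
  ∀ i j : V,
    Relation.ReflTransGen (fun u v => ∃ a, (t a = u ∧ h a = v) ∨ (t a = v ∧ h a = u)) i j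

/-- Morphisms of representations. -/
structure RepHom {K : Type} [Field K] {V A : Type} {t h : A → V}
    (X Y : QuivRep K V A t h) : Type where
  app : ∀ i, X.sp i →ₗ[K] Y.sp i
  comm : ∀ a : A, (app (h a)).comp (X.map a) = (Y.map a).comp (app (t a))

namespace RepHom

variable {K₀ : Type} [Field K₀] {t h : A → V}

/-- The identity morphism. -/
def idHom (X : QuivRep K₀ V A t h) : RepHom X X :=
  ⟨fun _ => LinearMap.id, fun a => by ext x; simp⟩

/-- Composition of morphisms. -/
def comp {X Y Z : QuivRep K₀ V A t h} (f : RepHom X Y) (g : RepHom Y Z) : RepHom X Z :=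
  ⟨fun i => (g.app i).comp (f.app i), fun a => by
    ext x
    have hf := LinearMap.congr_fun (f.comm a) x
    have hg := LinearMap.congr_fun (g.comm a) (f.app (t a) x)
    simp only [LinearMap.comp_apply] at hf hg ⊢
    rw [hf, hg]⟩

/-- Sum of morphisms. -/
def add {X Y : QuivRep K₀ V A t h} (f g : RepHom X Y) : RepHom X Y :=
  ⟨fun i => f.app i + g.app i, fun a => by
    simp only [LinearMap.add_comp, LinearMap.comp_add, f.comm a, g.comm a]⟩

/-- Scalar multiple of a morphism. -/
def smul {X Y : QuivRep K₀ V A t h} (c : K₀) (f : RepHom X Y) : RepHom X Y :=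
  ⟨fun i => c • f.app i, fun a => by
    simp only [LinearMap.smul_comp, LinearMap.comp_smul, f.comm a]⟩

end RepHom

/-- The number of arrows `i → j` in the Ext-quiver `Q(𝓔)` of a sequence of dimension
vectors: `−⟨β_i, β_j⟩` for `i ≠ j`. -/
def extMult (t h : A → V) {l : ℕ} (b : Fin l → V → ℕ) (i j : Fin l) : ℕ :=
  if i = j then 0 else (-(eulerForm t h (natZ (b i)) (natZ (b j)))).toNat

/-- The arrow set of the Ext-quiver `Q(𝓔)`. -/
abbrev ExtArrow (t h : A → V) {l : ℕ} (b : Fin l → V → ℕ) : Type :=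
  (i : Fin l) × (j : Fin l) × Fin (extMult t h b i j)

/-- The representation space `rep(Q,β)` as a product of matrix spaces. -/
abbrev RepSpace (t h : A → V) (β : V → ℕ) : Type :=
  ∀ a : A, Matrix (Fin (β (h a))) (Fin (β (t a))) K

/-- The (base-change) action of `GL(β)` on `rep(Q,β)`. -/
def glAct (t h : A → V) {β : V → ℕ}
    (g : ∀ i, Matrix.GeneralLinearGroup (Fin (β i)) K) (W : RepSpace K t h β) :
    RepSpace K t h β :=
  fun a => (g (h a) : Matrix (Fin (β (h a))) (Fin (β (h a))) K) * W a *
    (((g (t a))⁻¹ : Matrix.GeneralLinearGroup (Fin (β (t a))) K) :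
      Matrix (Fin (β (t a))) (Fin (β (t a))) K)

/-- A polynomial function on `rep(Q,β)`. -/
def IsPolyFun (t h : A → V) {β : V → ℕ} (f : RepSpace K t h β → K) : Prop :=
  ∃ P : MvPolynomial ((a : A) × (Fin (β (h a)) × Fin (β (t a)))) K,
    ∀ W, f W = MvPolynomial.eval (fun x => W x.1 x.2.1 x.2.2) P

/-- The weight space `SI(Q,β)_σ` of semi-invariant polynomial functions of weight `σ`. -/
def SIweight (t h : A → V) (β : V → ℕ) (σ : V → ℤ) :
    Submodule K (RepSpace K t h β → K) where
  carrier := {f | IsPolyFun K t h f ∧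
    ∀ (g : ∀ i, Matrix.GeneralLinearGroup (Fin (β i)) K) (W : RepSpace K t h β),
      f (glAct K t h g W) =
        (((∏ i, (Matrix.GeneralLinearGroup.det (g i)) ^ σ i : Kˣ) : K)) * f W}
  zero_mem' := by
    refine ⟨⟨0, by simp⟩, by simp⟩
  add_mem' := by
    rintro f g ⟨⟨P, hP⟩, hf⟩ ⟨⟨Q, hQ⟩, hg⟩
    refine ⟨⟨P + Q, fun W => ?_⟩, fun gg W => ?_⟩
    · simp [hP W, hQ W]
    · simp only [Pi.add_apply, hf gg W, hg gg W]; ring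
  smul_mem' := by
    rintro c f ⟨⟨P, hP⟩, hf⟩
    refine ⟨⟨MvPolynomial.C c * P, fun W => ?_⟩, fun gg W => ?_⟩
    · simp [hP W]
    · simp only [Pi.smul_apply, hf gg W, smul_eq_mul]; ring

/-- Entry of a matrix accessed through natural-number indices. -/
def entryN {m n : ℕ} (M : Matrix (Fin m) (Fin n) K) (r c : ℕ) : K :=
  if hr : r < m then (if hc : c < n then M ⟨r, hr⟩ ⟨c, hc⟩ else 0) else 0

/-- The matrix of the map `d^V_W` (with `V` of dimension vector `α` varying and `W` of
dimension vector `w` fixed), in the standard bases. -/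
def schofieldMatrix (t h : A → V) {α w : V → ℕ}
    (Vm : RepSpace K t h α) (W : RepSpace K t h w) :
    Matrix ((a : A) × (Fin (w (h a)) × Fin (α (t a)))) ((i : V) × (Fin (w i) × Fin (α i))) K :=
  fun r c =>
    (if c.1 = h r.1 ∧ (c.2.1 : ℕ) = (r.2.1 : ℕ) then
      entryN K (Vm r.1) (c.2.2 : ℕ) (r.2.2 : ℕ) else 0)
    - (if c.1 = t r.1 ∧ (c.2.2 : ℕ) = (r.2.2 : ℕ) then
      entryN K (W r.1) (r.2.1 : ℕ) (c.2.1 : ℕ) else 0)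

/-- The Schofield semi-invariant `c_W : rep(Q,α) → K`, `V ↦ det d^V_W` (defined when
`⟨α, dim W⟩ = 0`, i.e. when `d^V_W` is a square matrix). -/
def schofieldSI (t h : A → V) {α w : V → ℕ} (W : RepSpace K t h w)
    (Vm : RepSpace K t h α) : K :=
  if hc : Fintype.card ((i : V) × (Fin (w i) × Fin (α i))) =
      Fintype.card ((a : A) × (Fin (w (h a)) × Fin (α (t a)))) then
    ((schofieldMatrix K t h Vm W).submatrix (Fintype.equivOfCardEq hc) id).det
  else 0

/-- The representation of `Q` attached to a point of `rep(Q,β)`. -/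
def toRep (t h : A → V) {β : V → ℕ} (W : RepSpace K t h β) : QuivRep K V A t h where
  sp i := Fin (β i) → K
  map a := Matrix.mulVecLin (W a)

/-!
By Ringel's exact sequence `σ (dim Y) = dim Hom (X, Y) - dim Ext¹ (X, Y)` for every `Y`, where
`σ = ⟨dim X, ·⟩`. If both spaces vanish for `Y = W`, then `Hom (X, U) = 0` for every
subrepresentation `U` of `W`, so `σ (dim U) ≤ 0`. Conversely, let `T` be the trace of `X` in `W`,
the sum of the images of all morphisms `X → W`. It is a quotient of a power of `X`; since
`Ext¹ (X, ·)` is right exact and `X` is rigid, `Ext¹ (X, T) = 0`. Hence semi-stability gives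
`dim Hom (X, W) = dim Hom (X, T) = σ (dim T) ≤ 0`, and then `σ (dim W) = 0` forces
`Ext¹ (X, W) = 0`.
-/

section Representations

omit [Fintype V] [DecidableEq V] [Fintype A]

variable {K} {t h : A → V}

theorem sum_weightL_mul [Fintype V] [DecidableEq V] [Fintype A] (x y : V → ℤ) :
    ∑ i, weightL t h x i * y i = eulerForm t h x y := by
  simp only [weightL, eulerForm, mul_ite, mul_one, mul_zero, Finset.sum_ite_eq', Finset.mem_univ,
    if_true, sub_mul, Finset.sum_sub_distrib, Finset.sum_mul, ite_mul, zero_mul]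
  rw [Finset.sum_comm]
  simp only [Finset.sum_ite_eq, Finset.mem_univ, if_true]

namespace QuivRep

theorem ker_dmap (X Y : QuivRep K V A t h) : LinearMap.ker (dmap X Y) = homS X Y := by
  ext φ
  exact funext_iff.trans (forall_congr' fun _ => sub_eq_zero)

theorem extDim_eq_zero_iff [Finite A] {X Y : QuivRep K V A t h} :
    extDim X Y = 0 ↔ Function.Surjective (dmap X Y) := by
  rw [extDim, Module.finrank_zero_iff, Submodule.Quotient.subsingleton_iff,
    LinearMap.range_eq_top]

theorem eulerForm_dimVec [Fintype V] [Fintype A] (X Y : QuivRep K V A t h) :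
    eulerForm t h (natZ X.dimVec) (natZ Y.dimVec) = (homDim X Y : ℤ) - extDim X Y := by
  have rank_nullity := LinearMap.finrank_range_add_finrank_ker (dmap X Y)
  have rank_coker := Submodule.finrank_quotient_add_finrank (LinearMap.range (dmap X Y))
  rw [ker_dmap, ← homDim] at rank_nullity
  rw [← extDim] at rank_coker
  simp only [Module.finrank_pi_fintype, Module.finrank_linearMap] at rank_nullity rank_coker
  zify at rank_nullity rank_coker
  simp only [eulerForm, natZ, dimVec]
  linarith

theorem sum_weightL_dimVec [Fintype V] [DecidableEq V] [Fintype A] (X Y : QuivRep K V A t h) :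
    ∑ i, weightL t h (natZ X.dimVec) i * (Y.dimVec i : ℤ) = (homDim X Y : ℤ) - extDim X Y :=
  (sum_weightL_mul _ (natZ Y.dimVec)).trans (eulerForm_dimVec X Y)

theorem dmap_comp (X : QuivRep K V A t h) {Y Z : QuivRep K V A t h} (f : RepHom Y Z)
    (φ : ∀ i, X.sp i →ₗ[K] Y.sp i) :
    dmap X Z (fun i => f.app i ∘ₗ φ i) = fun a => f.app (h a) ∘ₗ dmap X Y φ a := by
  funext a
  simp only [dmap, LinearMap.coe_mk, AddHom.coe_mk, LinearMap.comp_sub, ← LinearMap.comp_assoc,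
    f.comm a]

theorem comp_mem_homS {X Y Z : QuivRep K V A t h} (f : RepHom Y Z)
    {φ : ∀ i, X.sp i →ₗ[K] Y.sp i} (hφ : φ ∈ homS X Y) :
    (fun i => f.app i ∘ₗ φ i) ∈ homS X Z :=
  (RepHom.comp ⟨φ, hφ⟩ f).comm

theorem homDim_le_of_injective [Finite V] (X : QuivRep K V A t h) {Y Z : QuivRep K V A t h}
    (f : RepHom Y Z) (hf : ∀ i, Function.Injective (f.app i)) : homDim X Y ≤ homDim X Z := by
  let postcomp : homS X Y →ₗ[K] homS X Z :=
    (LinearMap.piMap fun i => LinearMap.compRight K (f.app i)).restrict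
      fun _ hφ => comp_mem_homS f hφ
  refine LinearMap.finrank_le_finrank_of_injective (f := postcomp) fun φ ψ hφψ => ?_
  ext i x
  exact hf i (LinearMap.congr_fun (congrFun (congrArg Subtype.val hφψ) i) x)

theorem extDim_le_of_surjective [Finite A] (X : QuivRep K V A t h) {Y Z : QuivRep K V A t h}
    (f : RepHom Y Z) (hf : ∀ i, Function.Surjective (f.app i)) : extDim X Z ≤ extDim X Y := by
  let postcomp : (∀ a, X.sp (t a) →ₗ[K] Y.sp (h a)) →ₗ[K] ∀ a, X.sp (t a) →ₗ[K] Z.sp (h a) :=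
    LinearMap.piMap fun a => LinearMap.compRight K (f.app (h a))
  have postcomp_surjective : Function.Surjective postcomp :=
    Function.Surjective.piMap fun a ψ => Module.projective_lifting_property _ ψ (hf (h a))
  have range_le : LinearMap.range (dmap X Y) ≤ (LinearMap.range (dmap X Z)).comap postcomp := by
    rintro _ ⟨φ, rfl⟩
    exact ⟨_, dmap_comp X f φ⟩
  refine LinearMap.finrank_le_finrank_of_surjective (f := Submodule.mapQ _ _ postcomp range_le) ?_
  rw [← LinearMap.range_eq_top, Submodule.range_mapQ, LinearMap.range_eq_top.2 postcomp_surjective,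
    Submodule.map_top, Submodule.range_mkQ]

/-- The product of a finite family of representations; a constant family gives the powers of a
representation. -/
def pi {ι : Type} [Finite ι] (Y : ι → QuivRep K V A t h) : QuivRep K V A t h where
  sp i := ∀ k, (Y k).sp i
  map a := LinearMap.piMap fun k => (Y k).map a

theorem extDim_pi_eq_zero [Finite A] {ι : Type} [Finite ι] {X : QuivRep K V A t h}
    {Y : ι → QuivRep K V A t h} (hY : ∀ k, extDim X (Y k) = 0) : extDim X (pi Y) = 0 := by
  simp only [extDim_eq_zero_iff] at hY ⊢
  intro ψ
  choose θ hθ using fun k => hY k fun a => LinearMap.proj k ∘ₗ ψ a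
  refine ⟨fun i => LinearMap.pi fun k => θ k i, ?_⟩
  ext a x
  funext k
  exact LinearMap.congr_fun (congrFun (hθ k) a) x

/-- A subrepresentation regarded as a representation. -/
def Sub.toQuivRep {W : QuivRep K V A t h} (U : Sub W) : QuivRep K V A t h where
  sp i := U.sub i
  map a := (W.map a).restrict (U.le a)

/-- The inclusion of a subrepresentation. -/
def Sub.subtype {W : QuivRep K V A t h} (U : Sub W) : RepHom U.toQuivRep W where
  app i := (U.sub i).subtype
  comm _ := rfl

end QuivRep

namespace RepHom

/-- The morphism `QuivRep.pi Y → Z` given by the sum of a finite family of morphisms `Y k → Z`. -/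
def piSum {ι : Type} [Fintype ι] {Y : ι → QuivRep K V A t h} {Z : QuivRep K V A t h}
    (f : ∀ k, RepHom (Y k) Z) : RepHom (QuivRep.pi Y) Z where
  app i := ∑ k, (f k).app i ∘ₗ LinearMap.proj k
  comm a := by
    ext y
    simp only [LinearMap.comp_apply, LinearMap.sum_apply, map_sum]
    exact Finset.sum_congr rfl fun k _ => LinearMap.congr_fun ((f k).comm a) (y k)

theorem piSum_app_apply {ι : Type} [Fintype ι] {Y : ι → QuivRep K V A t h}
    {Z : QuivRep K V A t h} (f : ∀ k, RepHom (Y k) Z) (i : V) (y : ∀ k, (Y k).sp i) :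
    (piSum f).app i y = ∑ k, (f k).app i (y k) :=
  LinearMap.sum_apply _ _ y

/-- The image of a morphism. -/
def range {Y Z : QuivRep K V A t h} (f : RepHom Y Z) : QuivRep.Sub Z where
  sub i := LinearMap.range (f.app i)
  le a := by
    rintro _ ⟨y, rfl⟩
    exact ⟨Y.map a y, LinearMap.congr_fun (f.comm a) y⟩

/-- A morphism regarded as a morphism onto its image. -/
def rangeRestrict {Y Z : QuivRep K V A t h} (f : RepHom Y Z) :
    RepHom Y f.range.toQuivRep where
  app i := (f.app i).rangeRestrict
  comm a := by
    ext y
    exact Subtype.ext (LinearMap.congr_fun (f.comm a) y)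

end RepHom

namespace QuivRep

theorem homDim_toQuivRep_le [Finite V] (X : QuivRep K V A t h) {W : QuivRep K V A t h}
    (U : Sub W) : homDim X U.toQuivRep ≤ homDim X W :=
  homDim_le_of_injective X U.subtype fun i => (U.sub i).injective_subtype

theorem homDim_le_of_forall_apply_mem [Finite V] {X W : QuivRep K V A t h} (U : Sub W)
    (hU : ∀ φ ∈ homS X W, ∀ i x, φ i x ∈ U.sub i) : homDim X W ≤ homDim X U.toQuivRep := by
  let corestrict : homS X W →ₗ[K] homS X U.toQuivRep :=
    { toFun φ := ⟨fun i => (φ.1 i).codRestrict (U.sub i) (hU φ φ.2 i), fun a => by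
        ext x
        exact Subtype.ext (LinearMap.congr_fun (φ.2 a) x)⟩
      map_add' _ _ := rfl
      map_smul' _ _ := rfl }
  refine LinearMap.finrank_le_finrank_of_injective (f := corestrict) fun φ ψ hφψ => ?_
  ext i x
  exact congrArg Subtype.val (LinearMap.congr_fun (congrFun (congrArg Subtype.val hφψ) i) x)

/-- The trace of `X` in `W`, i.e. the sum of the images of all morphisms `X → W`. It is encoded as
the image of the morphism `Xⁿ → W` whose components are a basis of `Hom (X, W)`. -/
def trace [Finite V] (X W : QuivRep K V A t h) : Sub W :=
  (RepHom.piSum fun k =>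
    let φ := Module.finBasis K (homS X W) k
    (⟨φ.1, φ.2⟩ : RepHom X W)).range

theorem apply_mem_trace [Finite V] {X W : QuivRep K V A t h} {φ : ∀ i, X.sp i →ₗ[K] W.sp i}
    (hφ : φ ∈ homS X W) (i : V) (x : X.sp i) : φ i x ∈ (trace X W).sub i := by
  let b := Module.finBasis K (homS X W)
  let c := b.repr ⟨φ, hφ⟩
  have sum_eq : ∑ k, c k • (b k).1 = φ :=
    (AddSubmonoidClass.coe_finsetSum _ _).symm.trans (congrArg Subtype.val (b.sum_repr ⟨φ, hφ⟩))
  refine ⟨fun k => c k • x, (RepHom.piSum_app_apply _ i _).trans ?_⟩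
  calc ∑ k, (b k).1 i (c k • x) = (∑ k, c k • (b k).1) i x := by
        simp only [map_smul, Finset.sum_apply, LinearMap.sum_apply, Pi.smul_apply,
          LinearMap.smul_apply]
    _ = φ i x := by rw [sum_eq]

theorem homDim_trace [Finite V] (X W : QuivRep K V A t h) :
    homDim X (trace X W).toQuivRep = homDim X W :=
  (homDim_toQuivRep_le X _).antisymm
    (homDim_le_of_forall_apply_mem _ fun _ hφ i x => apply_mem_trace hφ i x)

theorem IsRigid.extDim_trace [Finite V] [Finite A] {X : QuivRep K V A t h} (hX : X.IsRigid)
    (W : QuivRep K V A t h) : extDim X (trace X W).toQuivRep = 0 :=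
  Nat.eq_zero_of_le_zero <|
    (extDim_le_of_surjective X (RepHom.rangeRestrict _)
      fun _ => LinearMap.surjective_rangeRestrict _).trans (extDim_pi_eq_zero fun _ => hX).le

end QuivRep

end Representations

theorem stmt6_general (t h : A → V) (X : QuivRep K V A t h) (hrig : X.IsRigid)
    (W : QuivRep K V A t h) :
    IsSemistable K (weightL t h (natZ X.dimVec)) W ↔
      QuivRep.homDim X W = 0 ∧ QuivRep.extDim X W = 0 := by
  have weight_W := X.sum_weightL_dimVec W
  have weight_sub (U : QuivRep.Sub W) : ∑ i, weightL t h (natZ X.dimVec) i * (U.dimVec i : ℤ) =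
      (X.homDim U.toQuivRep : ℤ) - X.extDim U.toQuivRep := X.sum_weightL_dimVec U.toQuivRep
  constructor
  · rintro ⟨weight_W_eq_zero, weight_sub_nonpos⟩
    have weight_trace_nonpos := weight_sub_nonpos (X.trace W)
    rw [weight_sub, X.homDim_trace, hrig.extDim_trace] at weight_trace_nonpos
    omega
  · rintro ⟨hom_eq_zero, ext_eq_zero⟩
    refine ⟨by rw [weight_W, hom_eq_zero, ext_eq_zero, sub_self], fun U => ?_⟩
    have hom_sub_le := X.homDim_toQuivRep_le U
    rw [weight_sub]
    omega

/-- If `V` is a rigid representation of dimension vector `α` and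
`σ = ⟨α,·⟩`, then `W` is `σ`-semi-stable iff `Hom_Q(V,W) = 0` and `Ext¹_Q(V,W) = 0`. -/
theorem stmt6 [IsAlgClosed K] [CharZero K] (t h : A → V) (hQ : Acyclic t h)
    (α : V → ℕ) (X : QuivRep K V A t h) (hX : X.dimVec = α) (hrig : X.IsRigid)
    (W : QuivRep K V A t h) :
    IsSemistable K (weightL t h (natZ α)) W ↔
      QuivRep.homDim X W = 0 ∧ QuivRep.extDim X W = 0 := by
  subst hX
  exact stmt6_general K t h X hrig W

end
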